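/- Fix an integer u ≥ 0. If ν assigns a nonnegative real number to each isomorphism class of finite abelian p-groups and for every finite abelian p-group A one has ∑_B |Sur(B,A)| · ν(B) = |A|^{-u} (sum over isomorphism classes of finite abelian p-groups B), then ν(B) = μ^u(B) for every finite abelian p-group B. -/

import Mathlib

/-!
Cohen–Lenstra moments: for every integer `u ≥ 0` and every finite abelian `p`-group `A`,
the sum over isomorphism classes of finite abelian `p`-groups `B` of `|Sur(B,A)| · μ^u(B)`
equals `|A|^{-u}`.
-/

open scoped Classical

/-- The number of surjective group homomorphisms `B → A`. -/
noncomputable def numSur (B A : Type*) [AddCommGroup B] [AddCommGroup A] : ℕ :=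
  Nat.card {f : B →+ A // Function.Surjective f}

/-- The number of automorphisms of `A`. -/
noncomputable def numAut (A : Type*) [AddCommGroup A] : ℕ :=
  Nat.card (A ≃+ A)

/-- The infinite product `∏_{k=1}^∞ (1 - p^{-(k+u)})`. -/
noncomputable def clProd (p u : ℕ) : ℝ :=
  ∏' k : ℕ, (1 - (p : ℝ) ^ (-((k : ℤ) + 1 + u)))

/-- The Cohen–Lenstra measure `μ^u(A) = |A|^{-u} |Aut(A)|^{-1} ∏_{k=1}^∞ (1 - p^{-(k+u)})`. -/
noncomputable def clMeasure (p u : ℕ) (A : Type*) [AddCommGroup A] : ℝ :=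
  ((Nat.card A : ℝ) ^ u)⁻¹ * ((numAut A : ℝ))⁻¹ * clProd p u

/-- The finite abelian `p`-group `G_λ = ⨁_i ℤ/p^{λ_i}ℤ` associated to a partition `λ`,
a finite multiset of positive integers. -/
def CLGroup (p : ℕ) (lam : Multiset ℕ+) : Type :=
  ∀ i : Fin lam.toList.length, ZMod (p ^ ((lam.toList.get i : ℕ+) : ℕ))

noncomputable instance (p : ℕ) (lam : Multiset ℕ+) : AddCommGroup (CLGroup p lam) := by
  delta CLGroup; infer_instance

/-- c_k -/
noncomputable def cC (p k : ℕ) : ℝ := (∏ i ∈ Finset.range k, ((p:ℝ)^(i+1) - 1))⁻¹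

noncomputable def tT (p n : ℕ) (x : ℝ) : ℝ :=
  ∑ k ∈ Finset.range (n+1), (-1)^k * cC p k * ∏ i ∈ Finset.range k, (x - (p:ℝ)^i)

lemma fac_ge (p : ℕ) (hp : 3 ≤ p) (i : ℕ) : (2:ℝ) ≤ (p:ℝ)^(i+1) - 1 := by
  have h3 : (3:ℝ) ≤ p := by exact_mod_cast hp
  have : (p:ℝ)^1 ≤ (p:ℝ)^(i+1) := pow_le_pow_right₀ (by linarith) (by omega)
  rw [pow_one] at this
  linarith

lemma cC_pos (p : ℕ) (hp : 3 ≤ p) (k : ℕ) : 0 < cC p k := by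
  unfold cC
  apply inv_pos.2
  apply Finset.prod_pos
  intro i _
  linarith [fac_ge p hp i]

lemma cC_succ (p : ℕ) (hp : 3 ≤ p) (k : ℕ) : cC p k = cC p (k+1) * ((p:ℝ)^(k+1) - 1) := by
  have h := fac_ge p hp k
  have : ((p:ℝ)^(k+1) - 1) ≠ 0 := by linarith
  unfold cC
  rw [Finset.prod_range_succ, mul_inv, mul_assoc, inv_mul_cancel₀ this, mul_one]

lemma cC_le (p : ℕ) (hp : 3 ≤ p) (k : ℕ) : cC p k ≤ (1/2)^k := by
  induction k with
  | zero => simp [cC]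
  | succ k ih =>
    have h := fac_ge p hp k
    have h1 := cC_succ p hp k
    have h2 := cC_pos p hp (k+1)
    rw [pow_succ]
    nlinarith

lemma tT_eq (p : ℕ) (hp : 3 ≤ p) (n : ℕ) (x : ℝ) :
    tT p n x = cC p n * ∏ i ∈ Finset.range n, ((p:ℝ)^(i+1) - x) := by
  induction n with
  | zero => simp [tT]
  | succ n ih =>
    have h1 := cC_succ p hp n
    unfold tT at ih ⊢
    rw [Finset.sum_range_succ, ih, Finset.prod_range_succ' (fun i => x - (p:ℝ)^i),
      Finset.prod_range_succ (fun i => (p:ℝ)^(i+1) - x), h1]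
    have : ∏ i ∈ Finset.range n, (x - (p:ℝ)^(i+1)) = (-1)^n * ∏ i ∈ Finset.range n, ((p:ℝ)^(i+1) - x) := by
      rw [← Finset.card_range n, ← Finset.prod_const, Finset.card_range, ← Finset.prod_mul_distrib]
      exact Finset.prod_congr rfl fun i _ => by ring
    rw [this]
    have e : ((-1:ℝ)^n)*(-1)^n = 1 := by rw [← mul_pow]; simp
    simp only [pow_zero]
    rw [pow_succ (-1:ℝ) n]
    linear_combination (-(cC p (n+1) * (∏ i ∈ Finset.range n, ((p:ℝ)^(i+1) - x)) * (x - 1))) * e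

/-- the alternating-sum estimate -/
lemma tT_bound (p : ℕ) (hp : 3 ≤ p) (n m : ℕ) :
    |tT p n ((p:ℝ)^m) - (if m = 0 then 1 else 0)| ≤
      cC p (n+1) * ∏ i ∈ Finset.range (n+1), ((p:ℝ)^m - (p:ℝ)^i) := by
  have h3 : (3:ℝ) ≤ p := by exact_mod_cast hp
  rcases Nat.eq_zero_or_pos m with rfl | hm
  · rw [tT_eq p hp]
    have h0 : cC p n * ∏ i ∈ Finset.range n, ((p:ℝ)^(i+1) - (p:ℝ)^0) = 1 := by
      rw [pow_zero]; unfold cC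
      apply inv_mul_cancel₀
      apply ne_of_gt
      apply Finset.prod_pos
      intro i _
      linarith [fac_ge p hp i]
    rw [h0, Finset.prod_eq_zero (Finset.mem_range.2 (Nat.succ_pos n)) (by simp)]
    simp
  · rw [if_neg (by omega), sub_zero, tT_eq p hp]
    by_cases hmn : m ≤ n
    · rw [Finset.prod_eq_zero (i := m-1) (Finset.mem_range.2 (by omega))
        (by rw [Nat.sub_add_cancel hm]; simp)]
      rw [Finset.prod_eq_zero (i := m) (Finset.mem_range.2 (by omega)) (by simp)]
      simp
    · have hc := cC_pos p hp n
      have hc' := cC_pos p hp (n+1)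
      rw [abs_mul, abs_of_pos hc, Finset.abs_prod, Finset.prod_range_succ', cC_succ p hp n]
      have : ∏ i ∈ Finset.range n, |(p:ℝ)^(i+1) - (p:ℝ)^m| =
          ∏ i ∈ Finset.range n, ((p:ℝ)^m - (p:ℝ)^(i+1)) := by
        refine Finset.prod_congr rfl fun i hi => ?_
        rw [abs_sub_comm, abs_of_nonneg]
        have := Finset.mem_range.1 hi
        exact sub_nonneg.2 (pow_le_pow_right₀ (by linarith) (by omega))
      rw [this]
      have hpos : 0 ≤ ∏ i ∈ Finset.range n, ((p:ℝ)^m - (p:ℝ)^(i+1)) := by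
        refine Finset.prod_nonneg fun i hi => ?_
        have := Finset.mem_range.1 hi
        exact sub_nonneg.2 (pow_le_pow_right₀ (by linarith) (by omega))
      have hle : (p:ℝ)^(n+1) ≤ (p:ℝ)^m := pow_le_pow_right₀ (by linarith) (by omega)
      rw [mul_assoc]
      apply mul_le_mul_of_nonneg_left _ hc'.le
      rw [mul_comm, pow_zero]
      apply mul_le_mul_of_nonneg_left _ hpos
      linarith

noncomputable def gG (p u : ℕ) : ℝ := ∑' k : ℕ, (-1)^k * cC p k * (((p:ℝ)^u)⁻¹)^k

lemma cC_summable (p : ℕ) (hp : 3 ≤ p) : Summable (cC p) :=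
  Summable.of_nonneg_of_le (fun k => (cC_pos p hp k).le) (cC_le p hp)
    (summable_geometric_of_lt_one (by norm_num) (by norm_num))

lemma gG_summable (p : ℕ) (hp : 3 ≤ p) (u : ℕ) :
    Summable (fun k : ℕ => (-1)^k * cC p k * (((p:ℝ)^u)⁻¹)^k) := by
  refine Summable.of_norm_bounded (cC_summable p hp) fun k => ?_
  have h3 : (3:ℝ) ≤ p := by exact_mod_cast hp
  rw [Real.norm_eq_abs, abs_mul, abs_mul, abs_pow, abs_neg, abs_one, one_pow, one_mul,
    abs_of_pos (cC_pos p hp k), abs_of_nonneg (by positivity)]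
  have : (((p:ℝ)^u)⁻¹)^k ≤ 1 :=
    pow_le_one₀ (by positivity) (inv_le_one_of_one_le₀ (one_le_pow₀ (by linarith)))
  nlinarith [cC_pos p hp k]

lemma gG_rec (p : ℕ) (hp : 3 ≤ p) (u : ℕ) :
    gG p u = (1 - ((p:ℝ)^(u+1))⁻¹) * gG p (u+1) := by
  have h3 : (3:ℝ) ≤ p := by exact_mod_cast hp
  have hp0 : (p:ℝ) ≠ 0 := by linarith
  have s0 := gG_summable p hp u
  have s1 := gG_summable p hp (u+1)
  have key : gG p u - gG p (u+1) = - ((p:ℝ)^(u+1))⁻¹ * gG p (u+1) := by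
    unfold gG
    rw [← s0.tsum_sub s1, (s0.sub s1).tsum_eq_zero_add, ← tsum_mul_left]
    simp only [pow_zero, sub_self, zero_add]
    congr 1
    funext k
    rw [cC_succ p hp k]
    have : ((p:ℝ)^u)⁻¹ = p * ((p:ℝ)^(u+1))⁻¹ := by
      rw [pow_succ]; field_simp
    rw [this]
    ring
  linarith

lemma gG_prod (p : ℕ) (hp : 3 ≤ p) (u n : ℕ) :
    gG p u = (∏ k ∈ Finset.range n, (1 - ((p:ℝ)^(k+1+u))⁻¹)) * gG p (u+n) := by
  induction n with
  | zero => simp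
  | succ n ih =>
    rw [ih, Finset.prod_range_succ, gG_rec p hp (u+n), show u + n + 1 = n + 1 + u by ring,
      show u + (n+1) = n+1+u by ring]
    ring

lemma gG_tendsto (p : ℕ) (hp : 3 ≤ p) : Filter.Tendsto (gG p) Filter.atTop (nhds 1) := by
  have h3 : (3:ℝ) ≤ p := by exact_mod_cast hp
  have h1 : ∀ u, |gG p u - 1| ≤ ((p:ℝ)⁻¹)^u * ∑' k, cC p (k+1) := by
    intro u
    have s0 := gG_summable p hp u
    have sc := (summable_nat_add_iff 1).2 (cC_summable p hp)
    have e : gG p u - 1 = ∑' k : ℕ, (-1)^(k+1) * cC p (k+1) * (((p:ℝ)^u)⁻¹)^(k+1) := by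
      unfold gG
      rw [s0.tsum_eq_zero_add]; simp [cC]
    rw [e, ← Real.norm_eq_abs, ← tsum_mul_left]
    refine tsum_of_norm_bounded (sc.mul_left _).hasSum fun k => ?_
    rw [Real.norm_eq_abs, abs_mul, abs_mul, abs_pow, abs_neg, abs_one, one_pow, one_mul,
      abs_of_pos (cC_pos p hp _), abs_of_nonneg (by positivity), pow_succ _ k, inv_pow (p:ℝ) u, mul_comm]
    have : (((p:ℝ)^u)⁻¹)^k ≤ 1 :=
      pow_le_one₀ (by positivity) (inv_le_one_of_one_le₀ (one_le_pow₀ (by linarith)))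
    apply mul_le_mul_of_nonneg_right _ (cC_pos p hp _).le
    exact mul_le_of_le_one_left (by positivity) this
  have h2 : Filter.Tendsto (fun u => ((p:ℝ)⁻¹)^u * ∑' k, cC p (k+1)) Filter.atTop (nhds 0) := by
    have := (tendsto_pow_atTop_nhds_zero_of_lt_one (r := (p:ℝ)⁻¹) (by positivity)
      (inv_lt_one_of_one_lt₀ (by linarith))).mul_const (∑' k, cC p (k+1))
    simpa using this
  rw [tendsto_iff_dist_tendsto_zero]
  exact squeeze_zero (fun _ => dist_nonneg) h1 h2

lemma gG_eq (p : ℕ) (hp : 3 ≤ p) (u : ℕ) : gG p u = clProd p u := by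
  have h3 : (3:ℝ) ≤ p := by exact_mod_cast hp
  have e : ∀ k : ℕ, (1 - (p : ℝ) ^ (-((k : ℤ) + 1 + u))) = 1 + (- ((p:ℝ)^(k+1+u))⁻¹) := by
    intro k
    rw [zpow_neg, sub_eq_add_neg]
    norm_cast
  have hs : Summable (fun k : ℕ => - ((p:ℝ)^(k+1+u))⁻¹) := by
    refine Summable.neg ?_
    have := (summable_geometric_of_lt_one (r := (p:ℝ)⁻¹) (by positivity)
      (inv_lt_one_of_one_lt₀ (by linarith)))
    have := (summable_nat_add_iff (1+u)).2 this
    refine this.congr fun k => ?_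
    rw [inv_pow, add_assoc]
  have hm := (Real.multipliable_one_add_of_summable hs).hasProd.tendsto_prod_nat
  unfold clProd
  simp_rw [e]
  have h2 := hm.mul ((gG_tendsto p hp).comp (Filter.tendsto_add_atTop_nat u))
  rw [mul_one] at h2
  refine tendsto_nhds_unique ?_ h2
  refine tendsto_const_nhds.congr fun n => ?_
  rw [gG_prod p hp u n]
  simp only [Function.comp, sub_eq_add_neg, add_comm]

section ext
variable {r : ℕ} {B V X : Type} [AddCommGroup B] [AddCommGroup V] [AddCommGroup X]

/-- relation map -/
def relMap {P V : Type} [AddCommGroup P] [AddCommGroup V] (d : P →+ P) (h : P →+ V) :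
    P →+ P × V := d.prod (-h)

/-- The extension `C_h` -/
abbrev extC {P V : Type} [AddCommGroup P] [AddCommGroup V] (d : P →+ P) (h : P →+ V) : Type :=
  (P × V) ⧸ (relMap d h).range

variable {P : Type} [AddCommGroup P] (d : P →+ P) (j : P →+ B)

/-- class of a pair -/
def cls (h : P →+ V) : P × V →+ extC d h := QuotientAddGroup.mk' _

lemma cls_surj (h : P →+ V) : Function.Surjective (cls d h) := QuotientAddGroup.mk'_surjective _

lemma cls_eq_zero (h : P →+ V) (q : P) (v : V) :
    cls d h (q, v) = 0 ↔ ∃ a, d a = q ∧ - h a = v := by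
  unfold cls
  rw [QuotientAddGroup.mk'_apply, QuotientAddGroup.eq_zero_iff, AddMonoidHom.mem_range]
  simp [relMap, Prod.ext_iff]

lemma cls_zero_inj {d : P →+ P} (hd : Function.Injective d) (h : P →+ V) (v w : V)
    (e : cls d h (0, v) = cls d h (0, w)) : v = w := by
  rw [← sub_eq_zero, ← map_sub] at e
  simp only [Prod.mk_sub_mk, sub_self] at e
  obtain ⟨a, ha, hv⟩ := (cls_eq_zero d h _ _).1 e
  have : a = 0 := hd (by rw [ha, map_zero])
  rw [this] at hv
  simp at hv
  exact sub_eq_zero.1 hv.symm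

/-- projection -/
def prj {d : P →+ P} {j : P →+ B} (hjd : ∀ q, j q = 0 ↔ ∃ a, d a = q) (h : P →+ V) :
    extC d h →+ B :=
  QuotientAddGroup.lift _ (j.comp (AddMonoidHom.fst P V)) (by
    rintro x ⟨a, rfl⟩
    simp only [relMap, AddMonoidHom.mem_ker, AddMonoidHom.comp_apply, AddMonoidHom.prod_apply,
      AddMonoidHom.coe_fst]
    exact (hjd _).2 ⟨a, rfl⟩)

variable {d j}

lemma prj_cls (hjd : ∀ q, j q = 0 ↔ ∃ a, d a = q) (h : P →+ V) (q : P) (v : V) : prj hjd h (cls d h (q, v)) = j q := rfl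

lemma prj_ker (hjd : ∀ q, j q = 0 ↔ ∃ a, d a = q) (h : P →+ V) (c : extC d h) (hc : prj hjd h c = 0) : ∃ v, cls d h (0, v) = c := by
  obtain ⟨⟨q, v⟩, rfl⟩ := cls_surj d h c
  rw [prj_cls] at hc
  obtain ⟨a, rfl⟩ := (hjd q).1 hc
  refine ⟨v + h a, ?_⟩
  rw [← sub_eq_zero, ← map_sub, Prod.mk_sub_mk, cls_eq_zero]
  exact ⟨-a, by simp, by simp⟩

lemma card_extC (hd : Function.Injective d) (hj : Function.Surjective j) (hjd : ∀ q, j q = 0 ↔ ∃ a, d a = q)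
    (h : P →+ V) [Finite B] [Finite V] :
    Nat.card (extC d h) = Nat.card B * Nat.card V := by
  have hs : Function.Surjective (prj hjd h) := by
    intro b
    obtain ⟨q, rfl⟩ := hj b
    exact ⟨cls d h (q, 0), prj_cls hjd h q 0⟩
  have e1 := AddSubgroup.card_eq_card_quotient_mul_card_addSubgroup (prj hjd h).ker
  rw [Nat.card_congr (QuotientAddGroup.quotientKerEquivOfSurjective _ hs).toEquiv] at e1
  rw [e1]
  congr 1
  symm
  refine Nat.card_congr (Equiv.ofBijective (fun v => ⟨cls d h (0, v), ?_⟩) ⟨?_, ?_⟩)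
  · rw [AddMonoidHom.mem_ker, prj_cls, map_zero]
  · intro v w e
    exact cls_zero_inj hd h v w (congrArg Subtype.val e)
  · rintro ⟨c, hc⟩
    obtain ⟨v, hv⟩ := prj_ker hjd h c hc
    exact ⟨v, Subtype.ext hv⟩

/-- presentation of X by P × ker φ -/
def pres (φ : X →+ B) (σ : P →+ X) : P × φ.ker →+ X := σ.coprod φ.ker.subtype

lemma pres_surj (hj : Function.Surjective j) (φ : X →+ B) (σ : P →+ X) (hσ : ∀ q, φ (σ q) = j q) :
    Function.Surjective (pres φ σ) := by
  intro x
  obtain ⟨q, hq⟩ := hj (φ x)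
  refine ⟨(q, ⟨x - σ q, ?_⟩), ?_⟩
  · rw [AddMonoidHom.mem_ker, map_sub, hσ, hq, sub_self]
  · simp [pres]

/-- the class h_t -/
def hT (d : P →+ P) (φ : X →+ B) (σ : P →+ X) (hσd : ∀ a, φ (σ (d a)) = 0) (g : φ.ker →+ V)
    (t : P →+ V) : P →+ V :=
  g.comp ((σ.comp d).codRestrict φ.ker hσd) + t.comp d

lemma hσd_of (hjd : ∀ q, j q = 0 ↔ ∃ a, d a = q) (φ : X →+ B) (σ : P →+ X) (hσ : ∀ q, φ (σ q) = j q) (a : P) : φ (σ (d a)) = 0 := by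
  rw [hσ, hjd]; exact ⟨a, rfl⟩

/-- existence of ψ_t -/
lemma exists_psi (hjd : ∀ q, j q = 0 ↔ ∃ a, d a = q) (hj : Function.Surjective j)
    (φ : X →+ B) (σ : P →+ X) (hσ : ∀ q, φ (σ q) = j q)
    (hσd : ∀ a, φ (σ (d a)) = 0) (g : φ.ker →+ V) (t : P →+ V) :
    ∃ ψ : X →+ extC d (hT d φ σ hσd g t),
      ∀ (q : P) (k : φ.ker), ψ (σ q + k) = cls d _ (q, g k - t q) := by
  let f : P × φ.ker →+ extC d (hT d φ σ hσd g t) :=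
    (cls d (hT d φ σ hσd g t)).comp
      ((AddMonoidHom.fst P φ.ker).prod (g.comp (AddMonoidHom.snd P φ.ker) - t.comp (AddMonoidHom.fst P φ.ker)))
  have hsurj := pres_surj hj φ σ hσ
  have hker : (pres φ σ).ker ≤ f.ker := by
    rintro ⟨q, k⟩ hqk
    rw [AddMonoidHom.mem_ker] at hqk ⊢
    simp only [pres, AddMonoidHom.coprod_apply, AddSubgroup.coe_subtype] at hqk
    have hq : j q = 0 := by
      have := congrArg φ hqk
      rw [map_add, hσ, map_zero, (AddMonoidHom.mem_ker).1 k.2, add_zero] at this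
      exact this
    obtain ⟨a, rfl⟩ := (hjd q).1 hq
    have hk : k = - ((σ.comp d).codRestrict φ.ker hσd) a := by
      apply Subtype.ext
      simp only [AddSubgroup.coe_neg, AddMonoidHom.codRestrict_apply, AddMonoidHom.comp_apply]
      exact eq_neg_of_add_eq_zero_right hqk
    show cls d _ (d a, g k - t (d a)) = 0
    rw [cls_eq_zero]
    refine ⟨a, rfl, ?_⟩
    rw [hk]
    simp only [hT, AddMonoidHom.add_apply, AddMonoidHom.comp_apply, map_neg]
    abel
  refine ⟨AddMonoidHom.liftOfSurjective (pres φ σ) hsurj ⟨f, hker⟩, fun q k => ?_⟩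
  have := AddMonoidHom.liftOfRightInverse_comp_apply (pres φ σ) (Function.surjInv hsurj)
    (Function.rightInverse_surjInv hsurj) ⟨f, hker⟩ (q, k)
  simpa [pres, f] using this

lemma card_key (hd : Function.Injective d) (hj : Function.Surjective j) (hjd : ∀ q, j q = 0 ↔ ∃ a, d a = q)
    (hlift : ∀ φ : X →+ B, Function.Surjective φ → ∃ σ : P →+ X, ∀ q, φ (σ q) = j q) :
    Nat.card (Σ h : P →+ V, {ψ : X →+ extC d h // Function.Surjective ψ}) =
    Nat.card (Σ φ : {φ : X →+ B // Function.Surjective φ},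
      {g : φ.1.ker →+ V // Function.Surjective g} × (P →+ V)) := by
  choose σ hσ using hlift
  have hσd : ∀ (φ : X →+ B) (hφ : Function.Surjective φ) (a : P), φ (σ φ hφ (d a)) = 0 :=
    fun φ hφ => hσd_of hjd φ _ (hσ φ hφ)
  choose Ψ hΨ using fun (φ : X →+ B) (hφ : Function.Surjective φ) (g : φ.ker →+ V) (t : P →+ V) =>
    exists_psi hjd hj φ (σ φ hφ) (hσ φ hφ) (hσd φ hφ) g t
  have hΨk : ∀ φ hφ g t (k : φ.ker), Ψ φ hφ g t k = cls d _ (0, g k) := by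
    intro φ hφ g t k
    have := hΨ φ hφ g t 0 k
    simpa using this
  have hΨp : ∀ φ hφ g t x, prj hjd _ (Ψ φ hφ g t x) = φ x := by
    intro φ hφ g t x
    obtain ⟨⟨q, k⟩, rfl⟩ := pres_surj hj φ (σ φ hφ) (hσ φ hφ) x
    have : pres φ (σ φ hφ) (q, k) = σ φ hφ q + k := by simp [pres]
    rw [this, hΨ, prj_cls, map_add, (AddMonoidHom.mem_ker).1 k.2, add_zero, hσ]
  have hΨs : ∀ (φ : X →+ B) (hφ : Function.Surjective φ) (g : φ.ker →+ V) (t : P →+ V), Function.Surjective g → Function.Surjective (Ψ φ hφ g t) := by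
    intro φ hφ g t hg c
    obtain ⟨x, hx⟩ := hφ (prj hjd _ c)
    obtain ⟨v, hv⟩ := prj_ker hjd _ (c - Ψ φ hφ g t x) (by rw [map_sub, hΨp, hx, sub_self])
    obtain ⟨k, rfl⟩ := hg v
    refine ⟨x + k, ?_⟩
    rw [map_add, hΨk, hv]; abel
  symm
  refine Nat.card_congr (Equiv.ofBijective (fun y =>
    ⟨hT d y.1.1 (σ y.1.1 y.1.2) (hσd _ _) y.2.1.1 y.2.2,
      ⟨Ψ y.1.1 y.1.2 y.2.1.1 y.2.2, hΨs _ _ _ _ y.2.1.2⟩⟩) ⟨?_, ?_⟩)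
  · -- injectivity through recovering data
    have rec1 : ∀ (y y' : Σ h : P →+ V, {ψ : X →+ extC d h // Function.Surjective ψ}), y = y' →
        (∀ x, prj hjd _ (y.2.1 x) = prj hjd _ (y'.2.1 x)) ∧
        (∀ x q v v', y.2.1 x = cls d y.1 (q, v) → y'.2.1 x = cls d y'.1 (q, v') → v = v') := by
      rintro y _ rfl
      refine ⟨fun _ => rfl, fun x q v v' e1 e2 => ?_⟩
      rw [e1, ← sub_eq_zero, ← map_sub, Prod.mk_sub_mk, sub_self, cls_eq_zero] at e2
      obtain ⟨a, ha, hv⟩ := e2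
      have : a = 0 := hd (by rw [ha, map_zero])
      rw [this] at hv
      simp at hv
      exact sub_eq_zero.1 hv.symm
    rintro ⟨⟨φ, hφ⟩, ⟨g, hg⟩, t⟩ ⟨⟨φ', hφ'⟩, ⟨g', hg'⟩, t'⟩ e
    obtain ⟨r1, r2⟩ := rec1 _ _ e
    simp only at r1 r2
    clear e
    have : φ = φ' := by
      ext x
      rw [← hΨp φ hφ g t, r1, hΨp]
    subst this
    have : g = g' := by
      ext k
      exact r2 _ _ _ _ (hΨk φ hφ g t k) (hΨk φ hφ' g' t' k)
    subst this
    have : t = t' := by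
      ext q
      have a1 := hΨ φ hφ g t q 0
      have a2 := hΨ φ hφ g t' q 0
      have := r2 _ _ _ _ a1 a2
      simpa using this
    subst this
    rfl
  · rintro ⟨h, ψ, hψ⟩
    let φ : X →+ B := (prj hjd h).comp ψ
    have hφ : Function.Surjective φ := by
      intro b
      obtain ⟨q, rfl⟩ := hj b
      obtain ⟨x, hx⟩ := hψ (cls d h (q, 0))
      exact ⟨x, by simp only [φ, AddMonoidHom.comp_apply, hx]; exact prj_cls hjd h q 0⟩
    have hg0 : ∀ k : φ.ker, ∃ v, cls d h (0, v) = ψ k := fun k => prj_ker hjd h _ k.2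
    choose g0 hg0 using hg0
    let g : φ.ker →+ V := AddMonoidHom.mk' g0 (by
      intro k l
      apply cls_zero_inj hd h
      rw [hg0]
      have : ((0:P), g0 k + g0 l) = (0, g0 k) + (0, g0 l) := by simp
      rw [this, map_add, hg0, hg0, AddSubgroup.coe_add, map_add])
    have hgψ : ∀ k : φ.ker, ψ k = cls d h (0, g k) := fun k => (hg0 k).symm
    have hg : Function.Surjective g := by
      intro v
      obtain ⟨x, hx⟩ := hψ (cls d h (0, v))
      have hxk : x ∈ φ.ker := by
        rw [AddMonoidHom.mem_ker]
        simp only [φ, AddMonoidHom.comp_apply, hx]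
        rw [prj_cls, map_zero]
      refine ⟨⟨x, hxk⟩, ?_⟩
      apply cls_zero_inj hd h
      rw [← hgψ, hx]
    have ht0 : ∀ q : P, ∃ v, cls d h (0, v) = cls d h (q, 0) - ψ (σ φ hφ q) := by
      intro q
      apply prj_ker hjd h
      rw [map_sub, prj_cls]
      have : prj hjd h (ψ (σ φ hφ q)) = j q := hσ φ hφ q
      rw [this, sub_self]
    choose t0 ht0 using ht0
    let t : P →+ V := AddMonoidHom.mk' t0 (by
      intro k l
      apply cls_zero_inj hd h
      rw [ht0]
      have : ((0:P), t0 k + t0 l) = (0, t0 k) + (0, t0 l) := by simp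
      rw [this, map_add (cls d h), ht0, ht0, map_add (σ φ hφ), map_add ψ]
      have : (k + l, (0:V)) = (k, 0) + (l, 0) := by simp
      rw [this, map_add]
      abel)
    have hψσ : ∀ q, ψ (σ φ hφ q) = cls d h (q, - t q) := by
      intro q
      have h1 : (q, - t q) = (q, 0) - (0, t q) := by simp
      rw [h1, map_sub]
      have : cls d h (0, t q) = _ := ht0 q
      rw [this]; abel
    refine ⟨⟨⟨φ, hφ⟩, ⟨g, hg⟩, t⟩, ?_⟩
    have hh : hT d φ (σ φ hφ) (hσd φ hφ) g t = h := by
      ext a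
      have e1 := hgψ (((σ φ hφ).comp d).codRestrict φ.ker (hσd φ hφ) a)
      have e2 : ψ (((σ φ hφ).comp d).codRestrict φ.ker (hσd φ hφ) a : φ.ker) = ψ (σ φ hφ (d a)) := rfl
      have e3 : hT d φ (σ φ hφ) (hσd φ hφ) g t a =
        g (((σ φ hφ).comp d).codRestrict φ.ker (hσd φ hφ) a) + t (d a) := rfl
      rw [e3]
      rw [e2, hψσ] at e1
      generalize g (((σ φ hφ).comp d).codRestrict φ.ker (hσd φ hφ) a) = z at e1 ⊢
      rw [← sub_eq_zero, ← map_sub, Prod.mk_sub_mk, cls_eq_zero] at e1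
      obtain ⟨b, hb, hb'⟩ := e1
      have hba : b = a := hd (by rw [hb, sub_zero])
      subst hba
      rw [← neg_inj, hb']; abel
    have hH := hΨ φ hφ g t
    show (⟨hT d φ (σ φ hφ) (hσd φ hφ) g t, ⟨Ψ φ hφ g t, hΨs φ hφ g t hg⟩⟩ :
      Σ h : P →+ V, {ψ : X →+ extC d h // Function.Surjective ψ}) = _
    generalize hΨs φ hφ g t hg = s1
    revert s1 hH
    generalize Ψ φ hφ g t = ψ1
    revert ψ1
    rw [hh]
    intro ψ1 hH s1
    have : ψ1 = ψ := by
      ext x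
      obtain ⟨⟨q, k⟩, rfl⟩ := pres_surj hj φ (σ φ hφ) (hσ φ hφ) x
      have : pres φ (σ φ hφ) (q, k) = σ φ hφ q + k := by simp [pres]
      rw [this, hH, map_add, hψσ, hgψ, ← map_add]
      congr 1
      simp [sub_eq_add_neg, add_comm]
    subst this
    rfl
end ext

/-- rank -/
noncomputable def mrk (p : ℕ) (K : Type) [AddCommGroup K] : ℕ :=
  Module.finrank (ZMod p) (K →+ ZMod p)

lemma surj_iff (p : ℕ) [Fact p.Prime] (K : Type) [AddCommGroup K] (k : ℕ)
    (s : Fin k → (K →+ ZMod p)) :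
    Function.Surjective (fun x : K => fun i => s i x) ↔ LinearIndependent (ZMod p) s := by
  rw [Fintype.linearIndependent_iff]
  constructor
  · intro hs a ha i
    obtain ⟨x, hx⟩ := hs (Pi.single i 1)
    have h1 := DFunLike.congr_fun ha x
    simp only [AddMonoidHom.finsetSum_apply, AddMonoidHom.smul_apply, AddMonoidHom.zero_apply] at h1
    have h2 : ∀ l, s l x = Pi.single (M := fun _ => ZMod p) i 1 l := fun l => congrFun hx l
    simp_rw [h2] at h1
    simpa [Pi.single_apply] using h1
  · intro hl
    by_contra hns
    let f : K →+ (Fin k → ZMod p) := AddMonoidHom.mk' (fun x i => s i x) (by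
      intro x y; funext i; simp)
    let W : Submodule (ZMod p) (Fin k → ZMod p) := AddSubgroup.toZModSubmodule p f.range
    have hW : W < ⊤ := by
      rw [lt_top_iff_ne_top]
      intro h
      apply hns
      intro y
      have : y ∈ W := by rw [h]; trivial
      exact this
    obtain ⟨ℓ, hℓ, hle⟩ := Submodule.exists_le_ker_of_lt_top W hW
    apply hℓ
    have hz : ∀ i, ℓ (Pi.single i 1) = 0 := by
      apply hl
      ext x
      have hx : f x ∈ W := ⟨x, rfl⟩
      have h0 : ℓ (f x) = 0 := hle hx
      rw [← Finset.univ_sum_single (f x)] at h0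
      simp only [AddMonoidHom.finsetSum_apply, AddMonoidHom.smul_apply, AddMonoidHom.zero_apply]
      rw [← h0, map_sum]
      refine Finset.sum_congr rfl fun i _ => ?_
      have : Pi.single i (f x i) = (f x i) • (Pi.single i 1 : Fin k → ZMod p) := by
        rw [← Pi.single_smul]; simp
      rw [this, map_smul, smul_eq_mul, smul_eq_mul, mul_comm]
      rfl
    apply LinearMap.pi_ext'
    intro i
    ext
    simpa using hz i

lemma card_sur (p : ℕ) [Fact p.Prime] (K : Type) [AddCommGroup K] [Finite K] (k : ℕ) :
    (Nat.card {g : K →+ (Fin k → ZMod p) // Function.Surjective g} : ℝ) =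
      ∏ i ∈ Finset.range k, ((p:ℝ)^(mrk p K) - (p:ℝ)^i) := by
  have e : {g : K →+ (Fin k → ZMod p) // Function.Surjective g} ≃
      {s : Fin k → (K →+ ZMod p) // LinearIndependent (ZMod p) s} :=
    { toFun := fun g => ⟨fun i => (Pi.evalAddMonoidHom _ i).comp g.1, (surj_iff p K k _).1 g.2⟩
      invFun := fun s => ⟨AddMonoidHom.mk' (fun x i => s.1 i x) (by
        intro x y; funext i; simp), (surj_iff p K k _).2 s.2⟩
      left_inv := fun g => rfl
      right_inv := fun s => rfl }
  rw [Nat.card_congr e]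
  have : Finite (K →+ ZMod p) := DFunLike.finite _
  haveI : Fintype (K →+ ZMod p) := Fintype.ofFinite _
  by_cases hk : k ≤ mrk p K
  · have := card_linearIndependent (K := ZMod p) (V := K →+ ZMod p) hk
    rw [this, ← Fin.prod_univ_eq_prod_range (fun i => (p:ℝ)^(mrk p K) - (p:ℝ)^i), Nat.cast_prod]
    refine Finset.prod_congr rfl fun i _ => ?_
    rw [ZMod.card, Nat.cast_sub]
    · simp [mrk]
    · exact Nat.pow_le_pow_right (Fact.out : p.Prime).pos (by have := i.2; unfold mrk at hk; omega)
  · rw [Finset.prod_eq_zero (i := mrk p K) (Finset.mem_range.2 (by omega)) (by simp)]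
    have : IsEmpty {s : Fin k → (K →+ ZMod p) // LinearIndependent (ZMod p) s} := by
      constructor
      rintro ⟨s, hs⟩
      have := hs.fintype_card_le_finrank
      rw [Fintype.card_fin] at this
      exact hk this
    simp

lemma exists_fun_ne (p : ℕ) [Fact p.Prime] (Q : Type) [AddCommGroup Q] (_ : Module (ZMod p) Q)
    (x : Q) (hx : x ≠ 0) : ∃ f : Q →+ ZMod p, f x ≠ 0 := by
  obtain ⟨f, hf⟩ := Module.Projective.exists_dual_ne_zero (ZMod p) hx
  exact ⟨f.toAddMonoidHom, hf⟩

lemma mrk_zero_iff (p : ℕ) [Fact p.Prime] (K : Type) [AddCommGroup K] [Finite K]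
    (hK : ∃ n, Nat.card K = p ^ n) : mrk p K = 0 ↔ Subsingleton K := by
  have : Finite (K →+ ZMod p) := DFunLike.finite _
  unfold mrk
  rw [Module.finrank_zero_iff]
  constructor
  · intro hs
    by_contra hns
    rw [not_subsingleton_iff_nontrivial] at hns
    obtain ⟨n, hn⟩ := hK
    have hdvd : p ∣ Nat.card K := by
      rw [hn]
      apply dvd_pow_self
      rintro rfl
      have := Finite.one_lt_card (α := K)
      rw [hn, pow_zero] at this
      exact absurd this (lt_irrefl _)
    obtain ⟨x, hx⟩ := exists_prime_addOrderOf_dvd_card' p hdvd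
    let H : AddSubgroup K := (nsmulAddMonoidHom p : K →+ K).range
    let inst : Module (ZMod p) (K ⧸ H) := QuotientAddGroup.zmodModule (n := p) (fun y => ⟨y, rfl⟩)
    have hH : ∀ y : K, y ∈ H := by
      intro y
      rw [← QuotientAddGroup.eq_zero_iff]
      by_contra hy
      obtain ⟨f, hf⟩ := exists_fun_ne p (K ⧸ H) inst _ hy
      have := Subsingleton.elim (f.comp (QuotientAddGroup.mk' H)) 0
      exact hf (DFunLike.congr_fun this y)
    have hsurj : Function.Surjective (nsmulAddMonoidHom p : K →+ K) := hH
    have hinj := Finite.injective_iff_surjective.2 hsurj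
    have : x = 0 := hinj (by
      simp only [nsmulAddMonoidHom_apply, smul_zero]
      rw [← hx]; exact addOrderOf_nsmul_eq_zero x)
    rw [this, addOrderOf_zero] at hx
    exact (Fact.out : p.Prime).one_lt.ne hx
  · intro hs
    constructor
    intro f g
    ext x
    rw [Subsingleton.elim x 0, map_zero, map_zero]

lemma CL_finite (p : ℕ) (hp : p.Prime) (lam : Multiset ℕ+) : Finite (CLGroup p lam) := by
  have : ∀ i : Fin lam.toList.length, NeZero (p ^ ((lam.toList.get i : ℕ+) : ℕ)) :=
    fun i => ⟨(pow_pos hp.pos _).ne'⟩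
  delta CLGroup; infer_instance

lemma CL_card (p : ℕ) (lam : Multiset ℕ+) :
    ∃ n, Nat.card (CLGroup p lam) = p ^ n := by
  refine ⟨∑ i : Fin lam.toList.length, ((lam.toList.get i : ℕ+) : ℕ), ?_⟩
  unfold CLGroup
  rw [Nat.card_pi, ← Finset.prod_pow_eq_pow_sum]
  simp only [Nat.card_zmod]

lemma CL_torsion (p : ℕ) (hp : p.Prime) (lam : Multiset ℕ+) (j : ℕ) :
    Nat.card {x : CLGroup p lam // p ^ j • x = 0} =
      p ^ (lam.map (fun a : ℕ+ => min (a:ℕ) j)).sum := by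
  have e : {x : CLGroup p lam // p ^ j • x = 0} ≃
      (∀ i : Fin lam.toList.length, {x : ZMod (p ^ ((lam.toList.get i : ℕ+) : ℕ)) // p ^ j • x = 0}) :=
    { toFun := fun x i => ⟨x.1 i, congrFun x.2 i⟩
      invFun := fun y => ⟨fun i => (y i).1, funext fun i => (y i).2⟩
      left_inv := fun _ => rfl
      right_inv := fun _ => rfl }
  rw [Nat.card_congr e, Nat.card_pi]
  have h1 : ∀ a : ℕ+, Nat.card {x : ZMod (p ^ (a:ℕ)) // p ^ j • x = 0} = p ^ (min (a:ℕ) j) := by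
    intro a
    haveI : NeZero (p ^ (a:ℕ)) := ⟨(pow_pos hp.pos _).ne'⟩
    have := IsAddCyclic.card_nsmulAddMonoidHom_ker (G := ZMod (p ^ (a:ℕ))) (p ^ j)
    rw [Nat.card_zmod] at this
    have hg : (p ^ (a:ℕ)).gcd (p ^ j) = p ^ (min (a:ℕ) j) := by
      rcases le_total (a:ℕ) j with h | h
      · rw [min_eq_left h]; exact Nat.gcd_eq_left (pow_dvd_pow p h)
      · rw [min_eq_right h]; exact Nat.gcd_eq_right (pow_dvd_pow p h)
    rw [← hg, ← this]
    rfl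
  simp_rw [h1]
  rw [Finset.prod_pow_eq_pow_sum]
  congr 1
  conv_rhs => rw [← Multiset.coe_toList lam]
  rw [Multiset.map_coe, Multiset.sum_coe]
  rw [← List.sum_ofFn]
  congr 1
  conv_rhs => rw [← List.ofFn_get lam.toList, List.map_ofFn]
  rfl

lemma CL_inj (p : ℕ) (hp : p.Prime) (lam mu : Multiset ℕ+) (e : CLGroup p lam ≃+ CLGroup p mu) :
    lam = mu := by
  have h1 : ∀ j : ℕ, (lam.map (fun a : ℕ+ => min (a:ℕ) j)).sum =
      (mu.map (fun a : ℕ+ => min (a:ℕ) j)).sum := by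
    intro j
    apply Nat.pow_right_injective hp.two_le
    show p ^ _ = p ^ _
    rw [← CL_torsion p hp, ← CL_torsion p hp]
    refine Nat.card_congr (e.toEquiv.subtypeEquiv fun x => ?_)
    rw [← map_eq_zero_iff e e.injective, map_nsmul]
    rfl
  have h2 : ∀ (s : Multiset ℕ+) (j : ℕ+), (s.map (fun a : ℕ+ => min (a:ℕ) (j - 1))).sum +
      (s.map (fun a : ℕ+ => min (a:ℕ) (j + 1))).sum + s.count j =
      2 * (s.map (fun a : ℕ+ => min (a:ℕ) j)).sum := by
    intro s j
    induction s using Multiset.induction_on with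
    | empty => simp
    | cons a s ih =>
      simp only [Multiset.map_cons, Multiset.sum_cons, Multiset.count_cons]
      have : min (a:ℕ) (j-1) + min (a:ℕ) (j+1) + (if j = a then 1 else 0) = 2 * min (a:ℕ) j := by
        have h : j = a ↔ (j:ℕ) = a := PNat.coe_inj.symm
        rw [if_congr h rfl rfl]
        have := j.pos
        split_ifs <;> omega
      omega
  ext j
  have a := h2 lam j
  have b := h2 mu j
  rw [h1, h1, h1] at a
  omega

/-- diagonal matrix map -/
noncomputable def dMap (p : ℕ) (lam : Multiset ℕ+) :
    (Fin lam.toList.length → ℤ) →+ (Fin lam.toList.length → ℤ) :=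
  AddMonoidHom.mk' (fun a i => (p:ℤ) ^ ((lam.toList.get i : ℕ+) : ℕ) * a i)
    (by intro a b; funext i; simp [mul_add])

/-- reduction map -/
noncomputable def jMap (p : ℕ) (lam : Multiset ℕ+) :
    (Fin lam.toList.length → ℤ) →+ CLGroup p lam :=
  AddMonoidHom.mk' (fun a => (fun i => (a i : ZMod (p ^ ((lam.toList.get i : ℕ+) : ℕ)))))
    (by intro a b; funext i; exact Int.cast_add _ _)

lemma dMap_inj (p : ℕ) (hp : p.Prime) (lam : Multiset ℕ+) : Function.Injective (dMap p lam) := by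
  intro a b h
  funext i
  have := congrFun h i
  have h0 : (p:ℤ) ^ ((lam.toList.get i : ℕ+) : ℕ) ≠ 0 := pow_ne_zero _ (by exact_mod_cast hp.ne_zero)
  exact mul_left_cancel₀ h0 this

lemma jMap_surj (p : ℕ) (lam : Multiset ℕ+) : Function.Surjective (jMap p lam) := by
  intro b
  choose a ha using fun i => ZMod.intCast_surjective (n := p ^ ((lam.toList.get i : ℕ+) : ℕ)) (b i)
  exact ⟨a, funext ha⟩

lemma jMap_ker (p : ℕ) (lam : Multiset ℕ+) (q : Fin lam.toList.length → ℤ) :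
    jMap p lam q = 0 ↔ ∃ a, dMap p lam a = q := by
  constructor
  · intro h
    have : ∀ i, ∃ c, q i = (p:ℤ) ^ ((lam.toList.get i : ℕ+) : ℕ) * c := by
      intro i
      have h1 : ((q i : ℤ) : ZMod (p ^ ((lam.toList.get i : ℕ+) : ℕ))) = 0 := congrFun h i
      rw [ZMod.intCast_zmod_eq_zero_iff_dvd] at h1
      push_cast at h1
      exact h1
    choose a ha using this
    exact ⟨a, funext fun i => (ha i).symm⟩
  · rintro ⟨a, rfl⟩
    funext i
    show ((((p:ℤ) ^ ((lam.toList.get i : ℕ+) : ℕ) * a i : ℤ)) : ZMod (p ^ ((lam.toList.get i : ℕ+) : ℕ))) = 0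
    rw [ZMod.intCast_zmod_eq_zero_iff_dvd]
    push_cast
    exact dvd_mul_right _ _

lemma exists_lift {n : ℕ} {X B : Type} [AddCommGroup X] [AddCommGroup B]
    (j : (Fin n → ℤ) →+ B) (φ : X →+ B) (hφ : Function.Surjective φ) :
    ∃ σ : (Fin n → ℤ) →+ X, ∀ q, φ (σ q) = j q := by
  obtain ⟨s, hs⟩ := Module.projective_lifting_property φ.toIntLinearMap j.toIntLinearMap hφ
  exact ⟨s.toAddMonoidHom, fun q => LinearMap.congr_fun hs q⟩

lemma finite_hom {n : ℕ} {V : Type} [AddCommGroup V] [Finite V] : Finite ((Fin n → ℤ) →+ V) := by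
  refine Finite.of_injective (β := Fin n → V) (fun f i => f (Pi.single i 1)) ?_
  intro f g h
  have : f.toIntLinearMap = g.toIntLinearMap := by
    apply LinearMap.pi_ext'
    intro i
    ext
    simpa using congrFun h i
  refine DFunLike.ext _ _ fun x => ?_
  exact LinearMap.congr_fun this x

/-- F_k -/
noncomputable def fF (p k : ℕ) (X B : Type) [AddCommGroup X] [AddCommGroup B]
    [Fintype {φ : X →+ B // Function.Surjective φ}] : ℝ :=
  ∑ φ : {φ : X →+ B // Function.Surjective φ},
    ∏ i ∈ Finset.range k, ((p:ℝ)^(mrk p φ.1.ker) - (p:ℝ)^i)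

lemma fF_eq (p k : ℕ) [Fact p.Prime] (lam : Multiset ℕ+) (X : Type) [AddCommGroup X] [Finite X]
    [Finite (CLGroup p lam)]
    [Fintype {φ : X →+ CLGroup p lam // Function.Surjective φ}]
    [Fintype ((Fin lam.toList.length → ℤ) →+ (Fin k → ZMod p))] :
    ∑ h : (Fin lam.toList.length → ℤ) →+ (Fin k → ZMod p), (numSur X (extC (dMap p lam) h) : ℝ) =
      (Fintype.card ((Fin lam.toList.length → ℤ) →+ (Fin k → ZMod p)) : ℝ) *
        fF p k X (CLGroup p lam) := by
  have hp : p.Prime := Fact.out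
  have key := card_key (X := X) (V := Fin k → ZMod p) (dMap_inj p hp lam) (jMap_surj p lam)
    (jMap_ker p lam) (fun φ hφ => exists_lift _ φ hφ)
  have hfin : ∀ h : (Fin lam.toList.length → ℤ) →+ (Fin k → ZMod p),
      Finite (extC (dMap p lam) h) := by
    intro h
    apply Nat.finite_of_card_ne_zero
    rw [card_extC (dMap_inj p hp lam) (jMap_surj p lam) (jMap_ker p lam)]
    exact mul_ne_zero Nat.card_pos.ne' Nat.card_pos.ne'
  have : ∀ h : (Fin lam.toList.length → ℤ) →+ (Fin k → ZMod p),
      Finite (X →+ extC (dMap p lam) h) := fun h => DFunLike.finite _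
  have : ∀ φ : X →+ CLGroup p lam, Finite (φ.ker →+ (Fin k → ZMod p)) := fun φ => DFunLike.finite _
  rw [Nat.card_sigma, Nat.card_sigma] at key
  simp_rw [Nat.card_prod] at key
  rw [← Finset.sum_mul] at key
  have key' := congrArg (Nat.cast : ℕ → ℝ) key
  push_cast at key'
  unfold numSur fF
  rw [key', Nat.card_eq_fintype_card (α := (Fin lam.toList.length → ℤ) →+ (Fin k → ZMod p)), mul_comm]
  congr 1
  exact Finset.sum_congr rfl fun φ _ => card_sur p _ k

lemma inj_sum (p : ℕ) [Fact p.Prime] (lam mu : Multiset ℕ+) [Finite (CLGroup p lam)] [Finite (CLGroup p mu)]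
    [Fintype {φ : CLGroup p mu →+ CLGroup p lam // Function.Surjective φ}] :
    ∑ φ : {φ : CLGroup p mu →+ CLGroup p lam // Function.Surjective φ},
      (if mrk p φ.1.ker = 0 then (1:ℝ) else 0) =
    if mu = lam then (numAut (CLGroup p lam) : ℝ) else 0 := by
  have hz : ∀ φ : {φ : CLGroup p mu →+ CLGroup p lam // Function.Surjective φ},
      mrk p φ.1.ker = 0 ↔ Function.Bijective φ.1 := by
    intro φ
    have hc : ∃ n, Nat.card φ.1.ker = p ^ n := by
      obtain ⟨n, hn⟩ := CL_card p mu
      have := AddSubgroup.card_addSubgroup_dvd_card φ.1.ker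
      rw [hn, Nat.dvd_prime_pow Fact.out] at this
      obtain ⟨m, _, hm⟩ := this
      exact ⟨m, hm⟩
    rw [mrk_zero_iff p _ hc, Function.Bijective, and_iff_left φ.2, ← AddMonoidHom.ker_eq_bot_iff]
    constructor
    · intro hs
      rw [AddSubgroup.eq_bot_iff_forall]
      intro x hx
      exact congrArg Subtype.val (Subsingleton.elim (⟨x, hx⟩ : φ.1.ker) 0)
    · intro hs
      rw [hs]
      infer_instance
  simp_rw [hz]
  split_ifs with h
  · subst h
    rw [Finset.sum_boole]
    unfold numAut
    congr 1
    rw [← Fintype.card_subtype, ← Nat.card_eq_fintype_card]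
    refine Nat.card_congr
      { toFun := fun φ => AddEquiv.ofBijective φ.1.1 φ.2
        invFun := fun e => ⟨⟨e.toAddMonoidHom, e.surjective⟩, e.bijective⟩
        left_inv := fun φ => rfl
        right_inv := fun e => by ext; rfl }
  · apply Finset.sum_eq_zero
    intro φ _
    rw [if_neg]
    intro hb
    exact h (CL_inj p Fact.out mu lam (AddEquiv.ofBijective φ.1 hb))

/-- The moments determine the Cohen–Lenstra measure: if `ν` is a nonnegative function on
isomorphism classes of finite abelian `p`-groups (indexed by partitions) such that for every
finite abelian `p`-group `A` one has `∑_B |Sur(B,A)| ν(B) = |A|^{-u}`, then `ν = μ^u`. -/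
theorem cl_moments_determine_measure (p : ℕ) (hp : p.Prime) (hodd : Odd p) (u : ℕ)
    (ν : Multiset ℕ+ → ℝ) (hν : ∀ lam, 0 ≤ ν lam)
    (hmom : ∀ (A : Type) [AddCommGroup A], (∃ n : ℕ, Nat.card A = p ^ n) →
      ∑' lam : Multiset ℕ+, (numSur (CLGroup p lam) A : ℝ) * ν lam
        = ((Nat.card A : ℝ) ^ u)⁻¹) :
    ∀ lam : Multiset ℕ+, ν lam = clMeasure p u (CLGroup p lam) := by
  intro lam
  haveI : Fact p.Prime := ⟨hp⟩
  have hp3 : 3 ≤ p := by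
    have := hp.two_le
    rcases hodd with ⟨m, hm⟩
    omega
  have hfinCL : ∀ mu, Finite (CLGroup p mu) := CL_finite p hp
  have hfH : ∀ mu, Finite (CLGroup p mu →+ CLGroup p lam) := fun mu => DFunLike.finite _
  haveI : ∀ mu, Fintype {φ : CLGroup p mu →+ CLGroup p lam // Function.Surjective φ} :=
    fun mu => Fintype.ofFinite _
  have hSum : ∀ (A : Type) [AddCommGroup A], (∃ n : ℕ, Nat.card A = p ^ n) →
      HasSum (fun mu : Multiset ℕ+ => (numSur (CLGroup p mu) A : ℝ) * ν mu)
        ((Nat.card A : ℝ) ^ u)⁻¹ := by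
    intro A _ hA
    have h1 := hmom A hA
    have hs : Summable (fun mu : Multiset ℕ+ => (numSur (CLGroup p mu) A : ℝ) * ν mu) := by
      by_contra hns
      rw [tsum_eq_zero_of_not_summable hns] at h1
      obtain ⟨n, hn⟩ := hA
      rw [hn] at h1
      have : (0:ℝ) < (((p^n : ℕ) : ℝ)^u)⁻¹ := by
        have : 0 < p ^ n := pow_pos hp.pos n
        positivity
      linarith
    rw [← h1]
    exact hs.hasSum
  set b : ℝ := ((Nat.card (CLGroup p lam) : ℝ) ^ u)⁻¹ with hb
  have hb0 : 0 < b := by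
    have : 0 < Nat.card (CLGroup p lam) := Nat.card_pos
    positivity
  -- moments of F_k
  have hF : ∀ k, HasSum (fun mu => fF p k (CLGroup p mu) (CLGroup p lam) * ν mu)
      (b * (((p:ℝ)^u)⁻¹)^k) := by
    intro k
    have hfin : Finite ((Fin lam.toList.length → ℤ) →+ (Fin k → ZMod p)) := finite_hom
    haveI : Fintype ((Fin lam.toList.length → ℤ) →+ (Fin k → ZMod p)) := Fintype.ofFinite _
    have h1 : ∀ h : (Fin lam.toList.length → ℤ) →+ (Fin k → ZMod p),
        HasSum (fun mu : Multiset ℕ+ => (numSur (CLGroup p mu) (extC (dMap p lam) h) : ℝ) * ν mu)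
          (b * (((p:ℝ)^u)⁻¹)^k) := by
      intro h
      have hc := card_extC (dMap_inj p hp lam) (jMap_surj p lam) (jMap_ker p lam) h
      have hV : Nat.card (Fin k → ZMod p) = p ^ k := by
        rw [Nat.card_pi]; simp
      rw [hV] at hc
      have h2 := hSum (extC (dMap p lam) h) (by
        obtain ⟨n, hn⟩ := CL_card p lam
        exact ⟨n + k, by rw [hc, hn, pow_add]⟩)
      rw [hc] at h2
      convert h2 using 1
      rw [hb]
      push_cast
      rw [mul_pow, mul_inv, inv_pow, ← pow_mul, ← pow_mul, mul_comm u k]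
    have h2 := hasSum_sum (s := Finset.univ) (fun h _ => h1 h)
    simp_rw [← Finset.sum_mul, fF_eq] at h2
    rw [Finset.sum_const, nsmul_eq_mul, Finset.card_univ] at h2
    simp_rw [mul_assoc] at h2
    have hN : (Fintype.card ((Fin lam.toList.length → ℤ) →+ (Fin k → ZMod p)) : ℝ) ≠ 0 := by
      exact_mod_cast Fintype.card_ne_zero
    exact (hasSum_mul_left_iff hN).1 h2
  -- truncated sums
  set R : ℕ → ℝ := fun n => ∑ k ∈ Finset.range (n+1), (-1)^k * cC p k * (b * (((p:ℝ)^u)⁻¹)^k) with hR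
  have hE : ∀ n, HasSum (fun mu => (∑ φ : {φ : CLGroup p mu →+ CLGroup p lam // Function.Surjective φ},
      tT p n ((p:ℝ)^(mrk p φ.1.ker))) * ν mu) (R n) := by
    intro n
    have h2 := hasSum_sum (s := Finset.range (n+1)) (fun k _ => (hF k).mul_left ((-1)^k * cC p k))
    refine Eq.mp (congrArg (fun f => HasSum f (R n)) (funext fun mu => ?_)) h2
    symm
    simp_rw [← mul_assoc]
    rw [← Finset.sum_mul]
    congr 1
    unfold tT fF
    rw [Finset.sum_comm]
    refine Finset.sum_congr rfl fun k _ => ?_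
    rw [Finset.mul_sum]
  have hI : HasSum (fun mu => (∑ φ : {φ : CLGroup p mu →+ CLGroup p lam // Function.Surjective φ},
      (if mrk p φ.1.ker = 0 then (1:ℝ) else 0)) * ν mu) (numAut (CLGroup p lam) * ν lam) := by
    simp_rw [inj_sum]
    have := hasSum_single (f := fun mu => (if mu = lam then (numAut (CLGroup p lam) : ℝ) else 0) * ν mu)
      lam (fun mu hmu => by simp [hmu])
    simpa using this
  have hbound : ∀ n, |R n - numAut (CLGroup p lam) * ν lam| ≤ cC p (n+1) * b := by
    intro n
    have hd := (hE n).sub (hI)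
    have hf := (hF (n+1)).mul_left (cC p (n+1))
    have hc := cC_pos p hp3 (n+1)
    have h1 : |R n - numAut (CLGroup p lam) * ν lam| ≤ cC p (n+1) * (b * (((p:ℝ)^u)⁻¹)^(n+1)) := by
      rw [← Real.norm_eq_abs, ← hd.tsum_eq]
      refine tsum_of_norm_bounded hf fun mu => ?_
      rw [← sub_mul, Real.norm_eq_abs, abs_mul, abs_of_nonneg (hν mu), ← mul_assoc]
      apply mul_le_mul_of_nonneg_right _ (hν mu)
      rw [← Finset.sum_sub_distrib]
      unfold fF
      rw [Finset.mul_sum]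
      refine (Finset.abs_sum_le_sum_abs _ _).trans (Finset.sum_le_sum fun φ _ => ?_)
      exact tT_bound p hp3 n _
    refine h1.trans (mul_le_mul_of_nonneg_left ?_ hc.le)
    have hp1 : (1:ℝ) ≤ p := by exact_mod_cast hp.one_lt.le
    exact mul_le_of_le_one_right hb0.le
      (pow_le_one₀ (by positivity) (inv_le_one_of_one_le₀ (one_le_pow₀ hp1)))
  have hlim1 : Filter.Tendsto R Filter.atTop (nhds (numAut (CLGroup p lam) * ν lam)) := by
    rw [tendsto_iff_dist_tendsto_zero]
    refine squeeze_zero (fun _ => dist_nonneg) hbound ?_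
    have := ((cC_summable p hp3).tendsto_atTop_zero.comp (Filter.tendsto_add_atTop_nat 1)).mul_const b
    simpa using this
  have hlim2 : Filter.Tendsto R Filter.atTop (nhds (b * clProd p u)) := by
    rw [← gG_eq p hp3 u]
    have h1 := (gG_summable p hp3 u).hasSum.tendsto_sum_nat
    have h2 := (h1.comp (Filter.tendsto_add_atTop_nat 1)).const_mul b
    refine h2.congr fun n => ?_
    simp only [Function.comp, hR]
    rw [Finset.mul_sum]
    exact Finset.sum_congr rfl fun k _ => by ring
  have heq := tendsto_nhds_unique hlim1 hlim2
  have hA : (numAut (CLGroup p lam) : ℝ) ≠ 0 := by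
    unfold numAut
    have : Finite (CLGroup p lam ≃+ CLGroup p lam) := DFunLike.finite _
    have : Nonempty (CLGroup p lam ≃+ CLGroup p lam) := ⟨AddEquiv.refl _⟩
    exact_mod_cast Nat.card_pos.ne'
  unfold clMeasure
  rw [← hb]
  field_simp
  linarith
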